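/- Let $(M,d)$ be a metric space, $q : M \to [0,\infty)$ a function, $\lambda \in (0,1)$ and $k \ge 2$ an integer. For a finite set $S \subseteq M$ put $Q(S) = \sum_{u \in S} q(u)$, $D(S) = \sum_{(u,v) \in S \times S,\ u \ne v} d(u,v)$ and $F(S) = \lambda\, Q(S) + (1-\lambda)\, D(S)$. For a finite set $T \subseteq M$ with $|T| \ge k$, let $\mathrm{opt}(T \mid k)$ denote a subset of $T$ of cardinality $k$ that maximizes $F$ among all such subsets. Greedy selection of $k$ items from $T$ produces a set $\{z_1,\dots,z_k\}$ of distinct elements of $T$ such that $z_1$ maximizes $q$ over $T$ and, for $i = 2,\dots,k$, $z_i$ maximizes $\lambda\, q(t) + (1-\lambda) \sum_{j<i} d(t,z_j)$ over $t \in T \setminus \{z_1,\dots,z_{i-1}\}$ (ties broken arbitrarily). Let a finite set $U \subseteq M$ be partitioned into disjoint parts $U_1,\dots,U_l$, each of cardinality at least $k$, let $S_i$ be a set produced by greedy selection of $k$ items from $U_i$, and let $O = \mathrm{opt}(U \mid k)$. Then $$(1-\lambda)\, D(O) \;\le\; 6\, F\bigl(\mathrm{opt}(S_1 \cup \dots \cup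 S_l \mid k)\bigr).$$ -/

import Mathlib

/-- The sequence `z 0, …, z (k-1)` is a run of greedy selection of `k` items from `T`: the items are
distinct elements of `T`, the first one has maximal quality, and each later one maximizes
`lam * q t + (1 - lam) * ∑ (distances from t to the items chosen before)` among the items of `T`
that have not been chosen before. Ties may be broken arbitrarily. -/
def IsGreedySel {M : Type*} [MetricSpace M] (q : M → ℝ) (lam : ℝ)
    (T : Finset M) (k : ℕ) (z : Fin k → M) : Prop :=
  Function.Injective z ∧ (∀ i, z i ∈ T) ∧
  (∀ hk : 0 < k, ∀ t ∈ T, q t ≤ q (z ⟨0, hk⟩)) ∧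
  ∀ i : Fin k, 0 < (i : ℕ) → ∀ t ∈ T, (∀ j : Fin k, j < i → t ≠ z j) →
    lam * q t + (1 - lam) * ∑ j ∈ Finset.univ.filter (fun j => j < i), dist t (z j) ≤
      lam * q (z i) + (1 - lam) * ∑ j ∈ Finset.univ.filter (fun j => j < i), dist (z i) (z j)

/-- Total quality of `S`. -/
noncomputable def Qsum {M : Type*} (q : M → ℝ) (S : Finset M) : ℝ := ∑ u ∈ S, q u

/-- Sum of the distances over ordered pairs of distinct elements of `S`. -/
noncomputable def Dsum {M : Type*} [MetricSpace M] [DecidableEq M] (S : Finset M) : ℝ :=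
  ∑ p ∈ S.offDiag, dist p.1 p.2

/-- The objective function. -/
noncomputable def Fobj {M : Type*} [MetricSpace M] [DecidableEq M]
    (q : M → ℝ) (lam : ℝ) (S : Finset M) : ℝ :=
  lam * Qsum q S + (1 - lam) * Dsum S

/-- `O` maximizes the objective among the subsets of `T` of cardinality `k`. -/
def IsOptSubset {M : Type*} [MetricSpace M] [DecidableEq M] (q : M → ℝ) (lam : ℝ)
    (T : Finset M) (k : ℕ) (O : Finset M) : Prop :=
  O ⊆ T ∧ O.card = k ∧ ∀ B ⊆ T, B.card = k → Fobj q lam B ≤ Fobj q lam O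

/-!
Let `W` be the union of the greedy selections. A point `o` of `O \ W` lies in some part, where it
was available and passed over at every step of the greedy run `z`. Summing the greedy inequalities
bounds `(1 - λ) (k - 1) ∑ j, d(o, z j)` by twice the objective of that run, hence by `2 F(opt)`.
Averaging over cyclic shifts, the points of `O \ W` are rerouted injectively to greedy items `g o`
with `(1 - λ) (k - 1) ∑ o, d(o, g o) ≤ 2 F(opt)`.

By the triangle inequality `D(O)` is at most `2 (k - 1) ∑ o, d(o, g o)` plus the dispersion of the
rerouted points. A rerouted point may collide with a point of `O ∩ W`, so these form a multiset with
multiplicities at most two. Its dispersion is at most twice that of a genuine `k`-subset of `W`, in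
which spare points of `W` stand in for the repeated ones. The total is `2 * 2 + 2 = 6`.
-/

section CrossDist

open Finset

variable {M : Type*} [PseudoMetricSpace M]

/-- Sum of the distances between the points of `X` and the points of `Y`. As the diagonal
contributes nothing, `crossDist S S` is the dispersion of `S` over ordered pairs. -/
noncomputable def crossDist (X Y : Finset M) : ℝ :=
  ∑ x ∈ X, ∑ y ∈ Y, dist x y

lemma crossDist_nonneg (X Y : Finset M) : 0 ≤ crossDist X Y :=
  sum_nonneg fun _ _ ↦ sum_nonneg fun _ _ ↦ dist_nonneg

lemma crossDist_comm (X Y : Finset M) : crossDist X Y = crossDist Y X := by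
  unfold crossDist
  rw [sum_comm]
  simp only [dist_comm]

lemma crossDist_mono_left {X X' : Finset M} (h : X ⊆ X') (Y : Finset M) :
    crossDist X Y ≤ crossDist X' Y :=
  sum_le_sum_of_subset_of_nonneg h fun _ _ _ ↦ sum_nonneg fun _ _ ↦ dist_nonneg

lemma crossDist_self_le_sum_dist (X : Finset M) (y : M) :
    crossDist X X ≤ 2 * #X * ∑ x ∈ X, dist y x :=
  calc crossDist X X ≤ ∑ u ∈ X, ∑ v ∈ X, (dist y u + dist y v) :=
        sum_le_sum fun u _ ↦ sum_le_sum fun v _ ↦ dist_triangle_left u v y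
    _ = 2 * #X * ∑ x ∈ X, dist y x := by
        simp only [sum_add_distrib, sum_const, nsmul_eq_mul, ← mul_sum]
        ring

lemma crossDist_self_le_two_mul {X Y : Finset M} (h : #X ≤ #Y) :
    crossDist X X ≤ 2 * crossDist X Y := by
  rcases X.eq_empty_or_nonempty with rfl | hX
  · simp [crossDist]
  have hX_pos : (0 : ℝ) < #X := mod_cast hX.card_pos
  refine le_of_mul_le_mul_left ?_ hX_pos
  calc #X * crossDist X X ≤ #Y * crossDist X X :=
        mul_le_mul_of_nonneg_right (mod_cast h) (crossDist_nonneg X X)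
    _ = ∑ _y ∈ Y, crossDist X X := by rw [sum_const, nsmul_eq_mul]
    _ ≤ ∑ y ∈ Y, 2 * #X * ∑ x ∈ X, dist y x :=
        sum_le_sum fun y _ ↦ crossDist_self_le_sum_dist X y
    _ = #X * (2 * crossDist X Y) := by
        rw [crossDist_comm X Y, crossDist, ← mul_sum]
        ring

variable [DecidableEq M]

lemma crossDist_union_add_inter_left (A B Z : Finset M) :
    crossDist (A ∪ B) Z + crossDist (A ∩ B) Z = crossDist A Z + crossDist B Z :=
  sum_union_inter

lemma crossDist_union_add_inter_right (Z A B : Finset M) :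
    crossDist Z (A ∪ B) + crossDist Z (A ∩ B) = crossDist Z A + crossDist Z B := by
  simpa only [crossDist_comm Z] using crossDist_union_add_inter_left A B Z

lemma crossDist_union_inter_self (A B : Finset M) :
    crossDist (A ∪ B) (A ∪ B) + 2 * crossDist (A ∪ B) (A ∩ B) + crossDist (A ∩ B) (A ∩ B) =
      crossDist A A + 2 * crossDist A B + crossDist B B := by
  linarith [crossDist_union_add_inter_left A B (A ∪ B), crossDist_union_add_inter_left A B (A ∩ B),
    crossDist_union_add_inter_right A A B, crossDist_union_add_inter_right B A B,
    crossDist_comm (A ∪ B) (A ∩ B), crossDist_comm A B]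

lemma crossDist_union_self {A B : Finset M} (h : Disjoint A B) :
    crossDist (A ∪ B) (A ∪ B) = crossDist A A + 2 * crossDist A B + crossDist B B := by
  simpa [disjoint_iff_inter_eq_empty.mp h, crossDist] using crossDist_union_inter_self A B

omit [DecidableEq M] in
lemma two_mul_crossDist_le_of_subset {X Y : Finset M} (h : Y ⊆ X) :
    2 * crossDist X Y ≤ crossDist X X + crossDist Y Y := by
  classical
  have hX : crossDist X X = _ := union_sdiff_of_subset h ▸ crossDist_union_self disjoint_sdiff
  have hXY : crossDist (X \ Y) Y + crossDist Y Y = crossDist X Y := sum_sdiff h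
  linarith [crossDist_comm (X \ Y) Y, crossDist_nonneg (X \ Y) (X \ Y)]

omit [DecidableEq M] in
/-- The left-hand side is the dispersion of the multiset sum of `A` and `B`. -/
lemma exists_subset_card_eq_crossDist_le {A B W : Finset M} {k : ℕ} (hA : A ⊆ W) (hB : B ⊆ W)
    (hAB : #A + #B ≤ k) (hk : k ≤ #W) :
    ∃ T ⊆ W, #T = k ∧
      crossDist A A + 2 * crossDist A B + crossDist B B ≤ 2 * crossDist T T := by
  classical
  have hcard : #(A ∪ B) + #(A ∩ B) ≤ k := by rwa [card_union_add_card_inter]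
  obtain ⟨T, hT, hTW, hTk⟩ :=
    exists_subsuperset_card_eq (union_subset hA hB) (Nat.le_of_add_right_le hcard) hk
  refine ⟨T, hTW, hTk, ?_⟩
  have hspare : #(A ∩ B) ≤ #(T \ (A ∪ B)) := by
    rw [card_sdiff_of_subset hT]
    omega
  have hinter : A ∩ B ⊆ A ∪ B := inter_subset_union
  have hT_eq : crossDist T T = _ := union_sdiff_of_subset hT ▸ crossDist_union_self disjoint_sdiff
  linarith [crossDist_union_inter_self A B, two_mul_crossDist_le_of_subset hinter,
    crossDist_self_le_two_mul hspare, crossDist_mono_left hinter (T \ (A ∪ B)),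
    crossDist_nonneg (T \ (A ∪ B)) (T \ (A ∪ B))]

lemma crossDist_le_crossDist_image_add (A : Finset M) {B : Finset M} {g : M → M}
    (hg : Set.InjOn g B) :
    crossDist A B ≤ crossDist A (B.image g) + #A * ∑ b ∈ B, dist b (g b) :=
  calc crossDist A B ≤ ∑ a ∈ A, ∑ b ∈ B, (dist a (g b) + dist b (g b)) :=
        sum_le_sum fun a _ ↦ sum_le_sum fun b _ ↦ dist_triangle_right a b (g b)
    _ = crossDist A (B.image g) + #A * ∑ b ∈ B, dist b (g b) := by
        simp only [crossDist, sum_image hg, sum_add_distrib, sum_const, nsmul_eq_mul]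

lemma crossDist_self_le_crossDist_image_add {B : Finset M} {g : M → M} (hg : Set.InjOn g B) :
    crossDist B B ≤
      crossDist (B.image g) (B.image g) + 2 * ((#B : ℝ) - 1) * ∑ b ∈ B, dist b (g b) := by
  have hrow : ∀ b ∈ B, ∑ c ∈ B, dist b c ≤
      ∑ c ∈ B, dist (g b) (g c) + ((#B : ℝ) - 2) * dist b (g b) + ∑ c ∈ B, dist c (g c) := by
    intro b hb
    -- For `c = b` the triangle inequality wastes `2 * dist b (g b)`.
    have hslack := single_le_sum
      (f := fun c ↦ dist (g b) (g c) + dist b (g b) + dist c (g c) - dist b c) (s := B)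
      (fun c _ ↦ by linarith [dist_triangle4_right b c (g b) (g c)]) hb
    simp only [dist_self, sum_sub_distrib, sum_add_distrib, sum_const, nsmul_eq_mul] at hslack
    linarith
  refine (sum_le_sum hrow).trans_eq ?_
  simp only [crossDist, sum_image hg, sum_add_distrib, ← mul_sum, sum_const, nsmul_eq_mul]
  ring

lemma exists_subset_card_eq_crossDist_le_reroute {A W : Finset M} {k : ℕ} (hA : #A ≤ k)
    (hk : k ≤ #W) {g : M → M} (hg : Set.InjOn g (A \ W : Finset M))
    (hgW : ∀ a ∈ A \ W, g a ∈ W) :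
    ∃ T ⊆ W, #T = k ∧
      crossDist A A ≤ 2 * (((k : ℝ) - 1) * ∑ a ∈ A \ W, dist a (g a)) + 2 * crossDist T T := by
  have hcard : #(A ∩ W) + #(A \ W) ≤ k := (card_inter_add_card_sdiff A W).trans_le hA
  obtain ⟨T, hTW, hTk, hT⟩ := exists_subset_card_eq_crossDist_le (inter_subset_right (s₁ := A))
    (image_subset_iff.mpr hgW) (by rwa [card_image_of_injOn hg]) hk
  refine ⟨T, hTW, hTk, ?_⟩
  have hsplit := crossDist_union_self (disjoint_sdiff_inter A W)
  rw [sdiff_union_inter, crossDist_comm (A \ W) (A ∩ W)] at hsplit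
  have hcost : 0 ≤ ∑ a ∈ A \ W, dist a (g a) := sum_nonneg fun _ _ ↦ dist_nonneg
  have hcard' : (#(A ∩ W) : ℝ) + #(A \ W) ≤ k := mod_cast hcard
  linarith [crossDist_le_crossDist_image_add (A ∩ W) hg, crossDist_self_le_crossDist_image_add hg,
    mul_le_mul_of_nonneg_right hcard' hcost]

end CrossDist

section Averaging

open Finset

variable {α R : Type*} [AddCommMonoid R] [LinearOrder R] [IsOrderedCancelAddMonoid R]

lemma exists_add_right_card_nsmul_sum_le {κ : Type*} [AddGroup κ] [Fintype κ] (B : Finset α)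
    (e : α → κ) (w : α → κ → R) :
    ∃ c, Fintype.card κ • ∑ b ∈ B, w b (e b + c) ≤ ∑ b ∈ B, ∑ j, w b j := by
  have havg : ∑ c, ∑ b ∈ B, w b (e b + c) = ∑ b ∈ B, ∑ j, w b j := by
    rw [sum_comm]
    exact sum_congr rfl fun b _ ↦ Equiv.sum_comp (Equiv.addLeft (e b)) (w b)
  obtain ⟨c, -, hc⟩ := exists_le_of_sum_le (univ_nonempty (α := κ))
    (f := fun c ↦ Fintype.card κ • ∑ b ∈ B, w b (e b + c))
    (g := fun _ ↦ ∑ b ∈ B, ∑ j, w b j)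
    (by rw [← smul_sum, havg, sum_const, card_univ])
  exact ⟨c, hc⟩

lemma exists_injOn_nsmul_sum_le {k : ℕ} [NeZero k] {B : Finset α} (hB : #B ≤ k)
    (w : α → Fin k → R) :
    ∃ f : α → Fin k, Set.InjOn f B ∧ k • ∑ b ∈ B, w b (f b) ≤ ∑ b ∈ B, ∑ j, w b j := by
  obtain ⟨e, -, he⟩ : ∃ e : α → Fin k, (B : Set α) ⊆ e ⁻¹' Set.univ ∧ Set.InjOn e B :=
    B.finite_toSet.exists_injOn_of_encard_le (by simpa using hB)
  obtain ⟨c, hc⟩ := exists_add_right_card_nsmul_sum_le B e w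
  exact ⟨fun b ↦ e b + c, (add_left_injective c).comp_injOn he, by simpa using hc⟩

lemma exists_injOn_sum_le {k : ℕ} [NeZero k] {B : Finset α} (hB : #B ≤ k) {w : α → Fin k → R}
    {C : R} (hC : 0 ≤ C) (hw : ∀ b ∈ B, ∑ j, w b j ≤ C) :
    ∃ f : α → Fin k, Set.InjOn f B ∧ ∑ b ∈ B, w b (f b) ≤ C := by
  obtain ⟨f, hf, hsum⟩ := exists_injOn_nsmul_sum_le hB w
  refine ⟨f, hf, le_of_nsmul_le_nsmul_right (NeZero.ne k) ?_⟩
  calc k • ∑ b ∈ B, w b (f b) ≤ ∑ b ∈ B, ∑ j, w b j := hsum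
    _ ≤ #B • C := sum_le_card_nsmul B _ C hw
    _ ≤ k • C := nsmul_le_nsmul_left hC hB

end Averaging

section PairSums

open Finset

variable {κ : Type*} [Fintype κ] [LinearOrder κ] [LocallyFiniteOrderTop κ]
  [LocallyFiniteOrderBot κ]

lemma sum_sum_Iio_add_eq_sum_sum_compl {R : Type*} [AddCommMonoid R] (f : κ → κ → R) :
    ∑ i, ∑ j ∈ Iio i, (f i j + f j i) = ∑ i, ∑ j ∈ {i}ᶜ, f j i := by
  rw [← sum_sum_Ioi_add_eq_sum_sum_off_diag, sum_comm' (t' := univ) (s' := Ioi) (by simp)]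

variable {M : Type*} [PseudoMetricSpace M]

lemma sum_sum_dist_eq_two_mul (z : κ → M) :
    ∑ i, ∑ j, dist (z i) (z j) = 2 * ∑ i, ∑ j ∈ Iio i, dist (z i) (z j) :=
  calc ∑ i, ∑ j, dist (z i) (z j) = ∑ i, ∑ j ∈ {i}ᶜ, dist (z i) (z j) :=
        sum_congr rfl fun i _ ↦ by rw [Fintype.sum_eq_add_sum_compl i, dist_self, zero_add]
    _ = ∑ i, ∑ j ∈ Iio i, (dist (z j) (z i) + dist (z i) (z j)) :=
        (sum_sum_Iio_add_eq_sum_sum_compl fun i j ↦ dist (z j) (z i)).symm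
    _ = 2 * ∑ i, ∑ j ∈ Iio i, dist (z i) (z j) := by
        simp only [dist_comm, ← two_mul, mul_sum]

lemma pred_card_mul_sum_dist_le (t : M) (z : κ → M) :
    ((Fintype.card κ : ℝ) - 1) * ∑ j, dist t (z j) ≤
      2 * ∑ i, ∑ j ∈ Iio i, dist t (z j) + ∑ i, ∑ j ∈ Iio i, dist (z i) (z j) := by
  have hcompl (i : κ) (c : ℝ) : ∑ _j ∈ {i}ᶜ, c = ((Fintype.card κ : ℝ) - 1) * c := by
    have := Fintype.sum_eq_add_sum_compl i fun _ ↦ c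
    rw [sum_const, card_univ, nsmul_eq_mul] at this
    linarith
  calc ((Fintype.card κ : ℝ) - 1) * ∑ j, dist t (z j)
      = ∑ i, ∑ _j ∈ {i}ᶜ, dist t (z i) := by simp only [hcompl, mul_sum]
    _ = ∑ i, ∑ j ∈ Iio i, (dist t (z j) + dist t (z i)) :=
        (sum_sum_Iio_add_eq_sum_sum_compl fun _ j ↦ dist t (z j)).symm
    _ ≤ ∑ i, ∑ j ∈ Iio i, (2 * dist t (z j) + dist (z i) (z j)) :=
        sum_le_sum fun i _ ↦ sum_le_sum fun j _ ↦ by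
          linarith [dist_triangle_right t (z i) (z j)]
    _ = 2 * ∑ i, ∑ j ∈ Iio i, dist t (z j) + ∑ i, ∑ j ∈ Iio i, dist (z i) (z j) := by
        simp only [sum_add_distrib, ← mul_sum]

end PairSums

section Objective

open Finset

variable {M : Type*} [MetricSpace M] [DecidableEq M] {q : M → ℝ} {lam : ℝ}

lemma Dsum_eq_crossDist (S : Finset M) : Dsum S = crossDist S S := by
  rw [Dsum, crossDist, ← sum_product', ← diag_union_offDiag,
    sum_union (disjoint_diag_offDiag S), sum_diag]
  simp only [dist_self, sum_const_zero, zero_add]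

lemma mul_Dsum_le_Fobj (hq : ∀ u, 0 ≤ q u) (hlam : 0 ≤ lam) (S : Finset M) :
    (1 - lam) * Dsum S ≤ Fobj q lam S :=
  le_add_of_nonneg_left (mul_nonneg hlam (sum_nonneg fun u _ ↦ hq u))

lemma Fobj_nonneg (hq : ∀ u, 0 ≤ q u) (hlam0 : 0 ≤ lam) (hlam1 : lam ≤ 1) (S : Finset M) :
    0 ≤ Fobj q lam S :=
  (mul_nonneg (sub_nonneg.mpr hlam1) (sum_nonneg fun _ _ ↦ dist_nonneg)).trans
    (mul_Dsum_le_Fobj hq hlam0 S)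

lemma Fobj_image_univ {k : ℕ} {z : Fin k → M} (hz : Function.Injective z) :
    Fobj q lam (univ.image z) =
      lam * ∑ i, q (z i) + (1 - lam) * (2 * ∑ i, ∑ j ∈ Iio i, dist (z i) (z j)) := by
  rw [Fobj, Qsum, Dsum_eq_crossDist, crossDist, ← sum_sum_dist_eq_two_mul]
  simp only [sum_image hz.injOn]

end Objective

section Greedy

open Finset Function

namespace IsGreedySel

variable {M : Type*} [MetricSpace M] {q : M → ℝ} {lam : ℝ} {T : Finset M} {k : ℕ} {z : Fin k → M}

lemma mul_sum_dist_le (hq : ∀ u, 0 ≤ q u) (hlam : 0 ≤ lam) (hz : IsGreedySel q lam T k z)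
    {t : M} (ht : t ∈ T) (htz : ∀ j, t ≠ z j) (i : Fin k) :
    (1 - lam) * ∑ j ∈ Iio i, dist t (z j) ≤
      lam * q (z i) + (1 - lam) * ∑ j ∈ Iio i, dist (z i) (z j) := by
  have hstep := hz.2.2.2 i
  simp only [filter_gt_eq_Iio] at hstep
  rcases Nat.eq_zero_or_pos (i : ℕ) with hi | hi
  · have hempty : Iio i = ∅ := by
      ext j
      simp [Fin.le_def, hi]
    simpa [hempty] using mul_nonneg hlam (hq (z i))
  · linarith [hstep hi t ht fun j _ ↦ htz j, mul_nonneg hlam (hq t)]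

lemma pred_mul_sum_dist_le [DecidableEq M] (hq : ∀ u, 0 ≤ q u) (hlam0 : 0 ≤ lam) (hlam1 : lam ≤ 1)
    (hz : IsGreedySel q lam T k z) {t : M} (ht : t ∈ T) (htz : ∀ j, t ≠ z j) :
    (1 - lam) * (((k : ℝ) - 1) * ∑ j, dist t (z j)) ≤ 2 * Fobj q lam (univ.image z) := by
  have hmu : 0 ≤ 1 - lam := sub_nonneg.mpr hlam1
  have hgain := sum_le_sum fun i (_ : i ∈ univ) ↦ hz.mul_sum_dist_le hq hlam0 ht htz i
  simp only [sum_add_distrib, ← mul_sum] at hgain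
  have htriangle := mul_le_mul_of_nonneg_left (pred_card_mul_sum_dist_le t z) hmu
  rw [Fintype.card_fin] at htriangle
  have hpairs : 0 ≤ (1 - lam) * ∑ i, ∑ j ∈ Iio i, dist (z i) (z j) :=
    mul_nonneg hmu (sum_nonneg fun _ _ ↦ sum_nonneg fun _ _ ↦ dist_nonneg)
  rw [Fobj_image_univ hz.1]
  linarith

end IsGreedySel

variable {M : Type*} [MetricSpace M] {q : M → ℝ} {lam : ℝ} {k : ℕ} {ι : Type*}
  {Upart : ι → Finset M} {z : ι → Fin k → M}

lemma injective2_of_isGreedySel (hdisj : Pairwise (Disjoint on Upart))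
    (hz : ∀ i, IsGreedySel q lam (Upart i) k (z i)) : Injective2 z := by
  intro i i' j j' h
  obtain rfl : i = i' := by
    by_contra hne
    exact disjoint_left.mp (hdisj hne) ((hz i).2.1 j) (h ▸ (hz i').2.1 j')
  exact ⟨rfl, (hz i).1 h⟩

variable [DecidableEq M] [Fintype ι]

lemma Fobj_image_le_of_isOptSubset {OptS : Finset M} {i : ι} (hz : Injective (z i))
    (hOptS : IsOptSubset q lam (univ.biUnion fun i ↦ univ.image (z i)) k OptS) :
    Fobj q lam (univ.image (z i)) ≤ Fobj q lam OptS :=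
  hOptS.2.2 _ (subset_biUnion_of_mem (fun i ↦ univ.image (z i)) (mem_univ i))
    ((card_image_of_injective _ hz).trans (card_fin k))

lemma exists_reroute_of_isGreedySel (hq : ∀ u, 0 ≤ q u) (hlam0 : 0 ≤ lam) (hlam1 : lam ≤ 1)
    (hdisj : Pairwise (Disjoint on Upart))
    (hz : ∀ i, IsGreedySel q lam (Upart i) k (z i)) {B OptS : Finset M} (hB : #B ≤ k)
    (hBU : B ⊆ univ.biUnion Upart) (hBz : ∀ b ∈ B, ∀ i j, b ≠ z i j)
    (hOptS : IsOptSubset q lam (univ.biUnion fun i ↦ univ.image (z i)) k OptS) :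
    ∃ g : M → M, Set.InjOn g B ∧ (∀ b ∈ B, ∃ i j, z i j = g b) ∧
      (1 - lam) * (((k : ℝ) - 1) * ∑ b ∈ B, dist b (g b)) ≤ 2 * Fobj q lam OptS := by
  have hF := Fobj_nonneg hq hlam0 hlam1 OptS
  rcases B.eq_empty_or_nonempty with rfl | hBne
  · exact ⟨id, by simp [hF]⟩
  have : NeZero k := ⟨(hBne.card_pos.trans_le hB).ne'⟩
  have hpart : ∀ b ∈ B, ∃ i, b ∈ Upart i := fun b hb ↦ by simpa using hBU hb
  have : Nonempty ι := hBne.elim fun b hb ↦ (hpart b hb).nonempty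
  choose! part hpart using hpart
  have hpoint : ∀ b ∈ B,
      ∑ j, (1 - lam) * (((k : ℝ) - 1) * dist b (z (part b) j)) ≤ 2 * Fobj q lam OptS := by
    intro b hb
    simp only [← mul_sum]
    linarith [(hz (part b)).pred_mul_sum_dist_le hq hlam0 hlam1 (hpart b hb) (hBz b hb _),
      Fobj_image_le_of_isOptSubset (hz (part b)).1 hOptS]
  obtain ⟨f, hf, hcost⟩ := exists_injOn_sum_le hB (mul_nonneg zero_le_two hF) hpoint
  refine ⟨fun b ↦ z (part b) (f b),
    fun b hb c hc h ↦ hf hb hc (injective2_of_isGreedySel hdisj hz h).2,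
    fun b _ ↦ ⟨part b, f b, rfl⟩, ?_⟩
  simpa only [mul_sum] using hcost

theorem stmt_5_general (hq : ∀ u, 0 ≤ q u) (hlam0 : 0 ≤ lam) (hlam1 : lam ≤ 1)
    (hdisj : Pairwise (Disjoint on Upart))
    (hz : ∀ i, IsGreedySel q lam (Upart i) k (z i)) {A OptS : Finset M}
    (hAU : A ⊆ univ.biUnion Upart) (hA : #A ≤ k)
    (hOptS : IsOptSubset q lam (univ.biUnion fun i ↦ univ.image (z i)) k OptS) :
    (1 - lam) * Dsum A ≤ 6 * Fobj q lam OptS := by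
  set W := univ.biUnion fun i ↦ univ.image (z i) with hW
  have hmemW (x : M) : x ∈ W ↔ ∃ i j, z i j = x := by simp [hW]
  obtain ⟨g, hg, hgz, hcost⟩ := exists_reroute_of_isGreedySel (B := A \ W) hq hlam0 hlam1 hdisj hz
    ((card_le_card sdiff_subset).trans hA) (sdiff_subset.trans hAU)
    (fun a ha i j h ↦ (mem_sdiff.mp ha).2 ((hmemW a).mpr ⟨i, j, h.symm⟩)) hOptS
  obtain ⟨T, hTW, hTk, hT⟩ := exists_subset_card_eq_crossDist_le_reroute hA
    (hOptS.2.1 ▸ card_le_card hOptS.1) hg fun a ha ↦ (hmemW _).mpr (hgz a ha)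
  rw [← Dsum_eq_crossDist, ← Dsum_eq_crossDist] at hT
  have hT_opt : (1 - lam) * Dsum T ≤ Fobj q lam OptS :=
    (mul_Dsum_le_Fobj hq hlam0 T).trans (hOptS.2.2 T hTW hTk)
  linarith [mul_le_mul_of_nonneg_left hT (sub_nonneg.mpr hlam1)]

end Greedy

theorem stmt_5 {M : Type*} [MetricSpace M] [DecidableEq M]
    (q : M → ℝ) (hq : ∀ u, 0 ≤ q u)
    (lam : ℝ) (hlam0 : 0 < lam) (hlam1 : lam < 1)
    (k l : ℕ) (hk : 2 ≤ k)
    (Upart : Fin l → Finset M)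
    (hdisj : ∀ i j, i ≠ j → Disjoint (Upart i) (Upart j))
    (hcard : ∀ i, k ≤ (Upart i).card)
    (U : Finset M) (hU : U = Finset.univ.biUnion Upart)
    (z : Fin l → Fin k → M)
    (hz : ∀ i, IsGreedySel q lam (Upart i) k (z i))
    (S : Fin l → Finset M) (hS : ∀ i, S i = Finset.univ.image (z i))
    (O : Finset M) (hO : IsOptSubset q lam U k O)
    (OptS : Finset M) (hOptS : IsOptSubset q lam (Finset.univ.biUnion S) k OptS) :
    (1 - lam) * Dsum O ≤ 6 * Fobj q lam OptS := by
  subst hU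
  obtain rfl : S = fun i ↦ Finset.univ.image (z i) := funext hS
  exact stmt_5_general hq hlam0.le hlam1.le hdisj hz hO.1 hO.2.1.le hOptS
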